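/- For every rational expression E over an alphabet A with decidable equality, the set D(E) of derived terms of E is finite and has cardinality at most ℓ(E) + 1. -/

import Mathlib

/-!
The bound comes from an explicit superset of the partial derivatives with respect to nonempty
words. Define `support E` by the recursion obtained from that of `∂ₐ` by forgetting the letter and
always keeping the second summand in a product. Each letter of `E` contributes one element `1`,
and unions and right multiplications do not increase the total, so `support E` has at most `ℓ(E)`
elements (`encard_support_le`). It contains every `∂ₐE` (`pderiv_subset_support`), and it is closed
under partial derivation (`pderiv_subset_support_of_mem`), so by induction on the word it contains
`∂ᵤE` for every nonempty `u`. The additional `1` accounts for `E` itself.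
-/

variable {A : Type} [DecidableEq A]

/-- The Antimirov partial derivative of a rational expression with respect to a letter:
`∂ₐ0 = ∂ₐ1 = ∅`; `∂ₐb = {1}` if `b = a` and `∅` otherwise; `∂ₐ(E+F) = ∂ₐE ∪ ∂ₐF`;
`∂ₐ(E·F) = (∂ₐE)·F ∪ ∂ₐF` if `ε ∈ ⟦E⟧` and `(∂ₐE)·F` otherwise; `∂ₐ(E∗) = (∂ₐE)·E∗`. -/
def pderiv (a : A) : RegularExpression A → Set (RegularExpression A)
  | RegularExpression.zero => ∅
  | RegularExpression.epsilon => ∅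
  | RegularExpression.char b => if b = a then {1} else ∅
  | RegularExpression.plus E F => pderiv a E ∪ pderiv a F
  | RegularExpression.comp E F =>
      if E.matchEpsilon then (fun G => G * F) '' pderiv a E ∪ pderiv a F
      else (fun G => G * F) '' pderiv a E
  | RegularExpression.star E => (fun G => G * RegularExpression.star E) '' pderiv a E

/-- The Antimirov partial derivative with respect to a word, iterating `pderiv`
(with `∂_ε E = {E}`). -/
def pderivWord : List A → RegularExpression A → Set (RegularExpression A)
  | [], E => {E}
  | a :: u, E => ⋃ F ∈ pderiv a E, pderivWord u F

/-- The set of derived terms of `E`: `E` together with all partial derivatives of `E` with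
respect to nonempty words. -/
def derivedTerms (E : RegularExpression A) : Set (RegularExpression A) :=
  {E} ∪ ⋃ (u : List A) (_ : u ≠ []), pderivWord u E

/-- The literal length of a rational expression: the number of occurrences of letters in it. -/
def litLength : RegularExpression A → ℕ
  | RegularExpression.zero => 0
  | RegularExpression.epsilon => 0
  | RegularExpression.char _ => 1
  | RegularExpression.plus P Q => litLength P + litLength Q
  | RegularExpression.comp P Q => litLength P + litLength Q
  | RegularExpression.star P => litLength P

/-- A set of expressions containing all partial derivatives of `E` with respect to nonempty words,
defined by structural recursion without reference to letters or to nullability. -/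
def support : RegularExpression A → Set (RegularExpression A)
  | RegularExpression.zero => ∅
  | RegularExpression.epsilon => ∅
  | RegularExpression.char _ => {1}
  | RegularExpression.plus E F => support E ∪ support F
  | RegularExpression.comp E F => (fun G => G * F) '' support E ∪ support F
  | RegularExpression.star E => (fun G => G * RegularExpression.star E) '' support E

theorem encard_support_le (E : RegularExpression A) :
    (support E).encard ≤ (litLength E : ℕ∞) := by
  induction E with
  | zero => simp [support]
  | epsilon => simp [support]
  | char b => simp [support, litLength]
  | plus E F hE hF =>
    simp only [support, litLength, Nat.cast_add]
    exact (Set.encard_union_le _ _).trans (add_le_add hE hF)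
  | comp E F hE hF =>
    simp only [support, litLength, Nat.cast_add]
    exact (Set.encard_union_le _ _).trans
      (add_le_add ((Set.encard_image_le _ _).trans hE) hF)
  | star E hE =>
    simp only [support, litLength]
    exact (Set.encard_image_le _ _).trans hE

theorem pderiv_mul_subset (a : A) (G F : RegularExpression A) :
    pderiv a (G * F) ⊆ (fun H => H * F) '' pderiv a G ∪ pderiv a F := by
  change pderiv a (RegularExpression.comp G F) ⊆ _
  rw [pderiv]
  split_ifs
  · exact subset_rfl
  · exact Set.subset_union_left

theorem pderiv_subset_support (a : A) (E : RegularExpression A) :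
    pderiv a E ⊆ support E := by
  induction E with
  | zero => simp [pderiv]
  | epsilon => simp [pderiv]
  | char b =>
    simp only [pderiv, support]
    split_ifs <;> simp
  | plus E F hE hF => exact Set.union_subset_union hE hF
  | comp E F hE hF =>
    exact (pderiv_mul_subset a E F).trans
      (Set.union_subset_union (Set.image_mono hE) hF)
  | star E hE => exact Set.image_mono hE

theorem pderiv_subset_support_of_mem (a : A) (E : RegularExpression A) :
    ∀ F ∈ support E, pderiv a F ⊆ support E := by
  induction E with
  | zero => simp [support]
  | epsilon => simp [support]
  | char b =>
    rintro F rfl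
    exact Set.empty_subset _
  | plus E₁ E₂ h₁ h₂ =>
    rintro F (hF | hF)
    · exact (h₁ F hF).trans Set.subset_union_left
    · exact (h₂ F hF).trans Set.subset_union_right
  | comp E₁ E₂ h₁ h₂ =>
    rintro F (⟨G, hG, rfl⟩ | hF)
    · exact (pderiv_mul_subset a G E₂).trans
        (Set.union_subset_union (Set.image_mono (h₁ G hG)) (pderiv_subset_support a E₂))
    · exact (h₂ F hF).trans Set.subset_union_right
  | star E h =>
    rintro F ⟨G, hG, rfl⟩
    -- The second summand `∂ₐ(E∗) = (∂ₐE)·E∗` lands in the same set as the first.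
    exact (pderiv_mul_subset a G _).trans
      (Set.union_subset (Set.image_mono (h G hG))
        (pderiv_subset_support a (RegularExpression.star E)))

theorem pderivWord_subset_support_of_mem (E : RegularExpression A) (u : List A) :
    ∀ F ∈ support E, pderivWord u F ⊆ support E := by
  induction u with
  | nil => simp [pderivWord]
  | cons a u ih =>
    intro F hF
    exact Set.iUnion₂_subset fun G hG => ih G (pderiv_subset_support_of_mem a E F hF hG)

theorem derivedTerms_subset (E : RegularExpression A) :
    derivedTerms E ⊆ {E} ∪ support E := by
  refine Set.union_subset_union_right _ (Set.iUnion₂_subset fun u hu => ?_)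
  cases u with
  | nil => exact absurd rfl hu
  | cons a u =>
    exact Set.iUnion₂_subset fun G hG =>
      pderivWord_subset_support_of_mem E u G (pderiv_subset_support a E hG)

/-- The set of derived terms of a rational expression `E` is finite, of cardinality at most
`ℓ(E) + 1`. -/
theorem derivedTerms_finite_card (E : RegularExpression A) :
    (derivedTerms E).Finite ∧ (derivedTerms E).ncard ≤ litLength E + 1 := by
  have h : (derivedTerms E).encard ≤ ((litLength E + 1 : ℕ) : ℕ∞) := by
    refine (Set.encard_le_encard (derivedTerms_subset E)).trans
      ((Set.encard_union_le _ _).trans ?_)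
    rw [Set.encard_singleton, add_comm, Nat.cast_add, Nat.cast_one]
    exact add_le_add_left (encard_support_le E) 1
  have hfin : (derivedTerms E).Finite := Set.finite_of_encard_le_coe h
  refine ⟨hfin, ?_⟩
  rw [← hfin.cast_ncard_eq] at h
  exact_mod_cast h
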